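/- For every acyclic net AN, the following three statements are equivalent: (1) AN is well-formed; (2) each transition of AN occurs in at least one scenario of AN, and each step sequence of AN is a step sequence of at least one scenario of AN; (3) each transition of AN occurs in at least one scenario of AN, and each firing sequence of AN is a firing sequence of at least one scenario of AN. -/

import Mathlib

/-- A net: a triple of places, transitions, and a flow relation. -/
structure Net (α : Type*) where
  places : Set α
  transitions : Set α
  flow : α → α → Prop

namespace Net

variable {α : Type*}

/-- The set of direct predecessors (preset) of a node. -/
def pre (N : Net α) (x : α) : Set α := {z | N.flow z x}

/-- The set of direct successors (postset) of a node. -/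
def post (N : Net α) (x : α) : Set α := {z | N.flow x z}

/-- Preset of a set of nodes. -/
def preSet (N : Net α) (X : Set α) : Set α := ⋃ x ∈ X, N.pre x

/-- Postset of a set of nodes. -/
def postSet (N : Net α) (X : Set α) : Set α := ⋃ x ∈ X, N.post x

/-- Initial places: places with empty preset. -/
def initPlaces (N : Net α) : Set α := {p ∈ N.places | N.pre p = ∅}

/-- Final places: places with empty postset. -/
def finPlaces (N : Net α) : Set α := {p ∈ N.places | N.post p = ∅}

/-- An acyclic net: places and transitions are disjoint finite sets, places nonempty,
the flow relation relates only places to transitions and vice versa, is acyclic, and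
every transition has at least one pre-place and one post-place. -/
def IsAcyclicNet (N : Net α) : Prop :=
  N.places.Finite ∧ N.transitions.Finite ∧
  Disjoint N.places N.transitions ∧
  (∀ x y, N.flow x y →
    (x ∈ N.places ∧ y ∈ N.transitions) ∨ (x ∈ N.transitions ∧ y ∈ N.places)) ∧
  N.places.Nonempty ∧
  (∀ x, ¬ Relation.TransGen N.flow x x) ∧
  (∀ t ∈ N.transitions, (N.pre t).Nonempty ∧ (N.post t).Nonempty)

/-- An occurrence net: an acyclic net with `|pre p| ≤ 1` and `|post p| ≤ 1` for each place. -/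
def IsOccurrenceNet (N : Net α) : Prop :=
  IsAcyclicNet N ∧ ∀ p ∈ N.places, (N.pre p).Subsingleton ∧ (N.post p).Subsingleton

/-- A backward deterministic acyclic net: an acyclic net with `|pre p| ≤ 1` for each place. -/
def IsBDAN (N : Net α) : Prop :=
  IsAcyclicNet N ∧ ∀ p ∈ N.places, (N.pre p).Subsingleton

/-- `N` is a subnet of `M`: nonempty set of places included, transitions included,
flow is the restriction of that of `M`, and every transition of `N` retains its
full preset and postset from `M`. -/
def IsSubnet (N M : Net α) : Prop :=
  N.places.Nonempty ∧ N.places ⊆ M.places ∧ N.transitions ⊆ M.transitions ∧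
  (∀ x y, N.flow x y ↔ M.flow x y ∧
    ((x ∈ N.places ∧ y ∈ N.transitions) ∨ (x ∈ N.transitions ∧ y ∈ N.places))) ∧
  (∀ t ∈ N.transitions, N.pre t = M.pre t ∧ N.post t = M.post t)

/-- `N` is a co-initial subnet of `M` : a subnet with the same initial places. -/
def CoInitial (N M : Net α) : Prop := IsSubnet N M ∧ N.initPlaces = M.initPlaces

/-- A step: a nonempty set of transitions with pairwise disjoint presets. -/
def IsStep (N : Net α) (U : Set α) : Prop :=
  U.Nonempty ∧ U ⊆ N.transitions ∧ ∀ t ∈ U, ∀ u ∈ U, t ≠ u → N.pre t ∩ N.pre u = ∅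

/-- A step `U` is enabled at marking `M` if all its pre-places are in `M`. -/
def Enabled (N : Net α) (M U : Set α) : Prop := IsStep N U ∧ N.preSet U ⊆ M

/-- Executing an enabled step `U` at `M` yields `M' = (M ∪ post U) \ pre U`. -/
def StepTrans (N : Net α) (M U M' : Set α) : Prop :=
  Enabled N M U ∧ M' = (M ∪ N.postSet U) \ N.preSet U

/-- Step sequences from a marking to a marking. -/
inductive StepSeqFrom (N : Net α) : Set α → List (Set α) → Set α → Prop
  | nil (M : Set α) : StepSeqFrom N M [] M
  | cons {M U M' σ M''} : StepTrans N M U M' → StepSeqFrom N M' σ M'' →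
      StepSeqFrom N M (U :: σ) M''

/-- The initial marking: the set of initial places. -/
def initMarking (N : Net α) : Set α := N.initPlaces

/-- Step sequences executable from the initial marking. -/
def sseq (N : Net α) : Set (List (Set α)) := {σ | ∃ M, StepSeqFrom N N.initMarking σ M}

/-- Mixed step sequences: alternating steps and resulting markings from a marking. -/
inductive MixFrom (N : Net α) : Set α → List (Set α × Set α) → Prop
  | nil (M : Set α) : MixFrom N M []
  | cons {M U M' l} : StepTrans N M U M' → MixFrom N M' l → MixFrom N M ((U, M') :: l)

/-- Mixed step sequences from the initial marking, represented as the initial marking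
paired with the list of consecutive (step, marking) pairs. -/
def mixsseq (N : Net α) : Set (Set α × List (Set α × Set α)) :=
  {p | p.1 = N.initMarking ∧ MixFrom N p.1 p.2}

/-- Markings reachable from the initial marking. -/
def reach (N : Net α) : Set (Set α) := {M | ∃ σ, StepSeqFrom N N.initMarking σ M}

/-- Firing sequences: step sequences all of whose steps are singletons. -/
def fseq (N : Net α) : Set (List (Set α)) :=
  {σ | σ ∈ N.sseq ∧ ∀ U ∈ σ, ∃ t, U = {t}}

/-- Maximal step sequences: no step can be appended. -/
def maxsseq (N : Net α) : Set (List (Set α)) :=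
  {σ | σ ∈ N.sseq ∧ ¬ ∃ U, σ ++ [U] ∈ N.sseq}

/-- Maximal mixed step sequences: no step and marking can be appended. -/
def maxmixsseq (N : Net α) : Set (Set α × List (Set α × Set α)) :=
  {p | p ∈ N.mixsseq ∧ ¬ ∃ U M, (p.1, p.2 ++ [(U, M)]) ∈ N.mixsseq}

/-- Final reachable markings: markings reached by maximal step sequences. -/
def finreach (N : Net α) : Set (Set α) :=
  {M | ∃ σ ∈ N.maxsseq, StepSeqFrom N N.initMarking σ M}

/-- A step sequence is well-formed if post-sets of distinct transitions in the same
step are disjoint, and post-sets of distinct steps are disjoint. -/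
def WellFormedSeq (N : Net α) (σ : List (Set α)) : Prop :=
  (∀ U ∈ σ, ∀ t ∈ U, ∀ u ∈ U, t ≠ u → N.post t ∩ N.post u = ∅) ∧
  σ.Pairwise (fun U V => N.postSet U ∩ N.postSet V = ∅)

/-- The set of transitions occurring in a step sequence. -/
def transOf (σ : List (Set α)) : Set α := {t | ∃ U ∈ σ, t ∈ U}

/-- A net is well-formed if each transition occurs in at least one step sequence and
all step sequences are well-formed. -/
def WellFormedNet (N : Net α) : Prop :=
  (∀ t ∈ N.transitions, ∃ σ ∈ N.sseq, t ∈ transOf σ) ∧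
  (∀ σ ∈ N.sseq, N.WellFormedSeq σ)

/-- Scenarios of a net: occurrence nets that are co-initial subnets of it. -/
def scenarios (N : Net α) : Set (Net α) :=
  {S | IsOccurrenceNet S ∧ CoInitial S N}

/-- Maximal scenarios: scenarios not strictly included (co-initially) in another scenario. -/
def maxscenarios (N : Net α) : Set (Net α) :=
  {S | S ∈ N.scenarios ∧ ¬ ∃ S', S' ∈ N.scenarios ∧ S' ≠ S ∧ CoInitial S S'}

/-- The scenario induced by a (well-formed) step sequence `σ`:
transitions are those occurring in `σ`, places are the initial places together with
the postsets of those transitions, and the flow is the restriction. -/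
def inducedScenario (N : Net α) (σ : List (Set α)) : Net α where
  places := N.initMarking ∪ N.postSet (transOf σ)
  transitions := transOf σ
  flow := fun x y => N.flow x y ∧
    ((x ∈ N.initMarking ∪ N.postSet (transOf σ) ∧ y ∈ transOf σ) ∨
     (x ∈ transOf σ ∧ y ∈ N.initMarking ∪ N.postSet (transOf σ)))

end Net

namespace Net

variable {α : Type*}

theorem mem_preSet {N : Net α} {X : Set α} {p : α} :
    p ∈ N.preSet X ↔ ∃ t ∈ X, N.flow p t := by
  simp [preSet, pre]

theorem mem_postSet {N : Net α} {X : Set α} {p : α} :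
    p ∈ N.postSet X ↔ ∃ t ∈ X, N.flow t p := by
  simp [postSet, post]

theorem mem_transOf_snoc {σ : List (Set α)} {U : Set α} {t : α} :
    t ∈ transOf (σ ++ [U]) ↔ t ∈ transOf σ ∨ t ∈ U := by
  simp only [transOf, List.mem_append, List.mem_singleton, Set.mem_setOf_eq]
  constructor
  · rintro ⟨V, hV | rfl, ht⟩
    · exact Or.inl ⟨V, hV, ht⟩
    · exact Or.inr ht
  · rintro (⟨V, hV, ht⟩ | ht)
    · exact ⟨V, Or.inl hV, ht⟩
    · exact ⟨U, Or.inr rfl, ht⟩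

theorem StepSeqFrom.append {N : Net α} {M σ M' τ M''} (h₁ : StepSeqFrom N M σ M')
    (h₂ : StepSeqFrom N M' τ M'') : StepSeqFrom N M (σ ++ τ) M'' := by
  induction h₁ with
  | nil => exact h₂
  | cons hs _ ih => exact .cons hs (ih h₂)

theorem StepSeqFrom.split {N : Net α} {M σ τ M''} (h₁ : StepSeqFrom N M (σ ++ τ) M'') :
    ∃ M', StepSeqFrom N M σ M' ∧ StepSeqFrom N M' τ M'' := by
  induction σ generalizing M with
  | nil => exact ⟨M, .nil M, h₁⟩
  | cons U σ ih =>
    cases h₁ with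
    | cons hs hr =>
      obtain ⟨M', h1, h2⟩ := ih hr
      exact ⟨M', .cons hs h1, h2⟩

theorem StepSeqFrom.snoc_induction {N : Net α} {M₀ : Set α} {P : List (Set α) → Set α → Prop}
    (nil : P [] M₀)
    (snoc : ∀ σ M U M', StepSeqFrom N M₀ σ M → P σ M → StepTrans N M U M' → P (σ ++ [U]) M')
    {σ M} (h : StepSeqFrom N M₀ σ M) : P σ M := by
  induction σ using List.reverseRecOn generalizing M with
  | nil => cases h; exact nil
  | append_singleton σ U ih =>
    obtain ⟨M', h1, h2⟩ := h.split
    cases h2 with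
    | cons hs hr =>
      cases hr
      exact snoc _ _ _ _ h1 (ih h1) hs

theorem StepTrans.mem_iff {N : Net α} {M U M' : Set α} (h : StepTrans N M U M') (p : α) :
    p ∈ M' ↔ (p ∈ M ∨ ∃ t ∈ U, N.flow t p) ∧ ¬ ∃ t ∈ U, N.flow p t := by
  rw [h.2]
  simp [mem_preSet, mem_postSet]

theorem StepTrans.pre_mem {N : Net α} {M U M' : Set α} (h : StepTrans N M U M') {p t : α}
    (ht : t ∈ U) (hp : N.flow p t) : p ∈ M :=
  h.1.2 (mem_preSet.2 ⟨t, ht, hp⟩)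

theorem StepTrans.sub {N : Net α} {M U M' : Set α} (h : StepTrans N M U M') :
    U ⊆ N.transitions := h.1.1.2.1

theorem not_init {N : Net α} {t p : α} (h : N.flow t p) : p ∉ N.initMarking := by
  intro hp
  have : t ∈ N.pre p := h
  rw [hp.2] at this
  exact this

/-- General facts about step sequences. -/
theorem seq_basic {N : Net α} {σ M} (h : StepSeqFrom N N.initMarking σ M) :
    transOf σ ⊆ N.transitions ∧
    (∀ p ∈ M, p ∈ N.initMarking ∨ ∃ t ∈ transOf σ, N.flow t p) ∧
    (∀ u ∈ transOf σ, ∀ p, N.flow p u → p ∈ N.initMarking ∨ ∃ t ∈ transOf σ, N.flow t p) ∧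
    (∀ p, (p ∈ N.initMarking ∨ ∃ t ∈ transOf σ, N.flow t p) →
      (¬ ∃ t ∈ transOf σ, N.flow p t) → p ∈ M) := by
  refine h.snoc_induction (P := fun σ M => transOf σ ⊆ N.transitions ∧
    (∀ p ∈ M, p ∈ N.initMarking ∨ ∃ t ∈ transOf σ, N.flow t p) ∧
    (∀ u ∈ transOf σ, ∀ p, N.flow p u → p ∈ N.initMarking ∨ ∃ t ∈ transOf σ, N.flow t p) ∧
    (∀ p, (p ∈ N.initMarking ∨ ∃ t ∈ transOf σ, N.flow t p) →
      (¬ ∃ t ∈ transOf σ, N.flow p t) → p ∈ M)) ?_ ?_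
  · simp [transOf]
  · rintro σ M U M' - ⟨h1, h2, h3, h4⟩ hs
    have hm := hs.mem_iff
    have hp := fun p t => hs.pre_mem (p := p) (t := t)
    have hsub := hs.sub
    refine ⟨?_, ?_, ?_, ?_⟩
    · intro t ht
      rcases mem_transOf_snoc.1 ht with ht | ht
      · exact h1 ht
      · exact hsub ht
    · intro p hpM
      have := (hm p).1 hpM
      simp only [mem_transOf_snoc]
      grind
    · intro u hu p hpu
      simp only [mem_transOf_snoc] at hu ⊢
      grind
    · intro p hq hn
      simp only [mem_transOf_snoc] at hq hn
      refine (hm p).2 ⟨?_, fun ⟨t, ht, hf⟩ => hn ⟨t, Or.inr ht, hf⟩⟩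
      have hn' : ¬ ∃ t ∈ transOf σ, N.flow p t := fun ⟨t, ht, hf⟩ => hn ⟨t, Or.inl ht, hf⟩
      rcases hq with hq | ⟨t, ht | ht, hf⟩
      · exact Or.inl (h4 p (Or.inl hq) hn')
      · exact Or.inl (h4 p (Or.inr ⟨t, ht, hf⟩) hn')
      · exact Or.inr ⟨t, ht, hf⟩

theorem wf_snoc {N : Net α} {σ : List (Set α)} {U : Set α} :
    N.WellFormedSeq (σ ++ [U]) ↔ N.WellFormedSeq σ ∧
      (∀ t ∈ U, ∀ u ∈ U, ∀ p, N.flow t p → N.flow u p → t = u) ∧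
      (∀ t ∈ transOf σ, ∀ u ∈ U, ∀ p, N.flow t p → ¬ N.flow u p) := by
  unfold WellFormedSeq
  rw [List.pairwise_append]
  simp only [List.mem_append, List.mem_singleton, List.pairwise_singleton, true_and,
    Set.eq_empty_iff_forall_notMem, Set.mem_inter_iff, mem_postSet, transOf, Set.mem_setOf_eq]
  constructor
  · rintro ⟨h1, h2, h3⟩
    refine ⟨⟨fun V hV => h1 V (Or.inl hV), h2⟩, ?_, ?_⟩
    · intro t ht u hu p hp hq
      by_contra hne
      exact h1 U (Or.inr rfl) t ht u hu hne p ⟨hp, hq⟩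
    · rintro t ⟨V, hV, ht⟩ u hu p hp hq
      exact h3 V hV U rfl p ⟨⟨t, ht, hp⟩, ⟨u, hu, hq⟩⟩
  · rintro ⟨⟨h1, h2⟩, h3, h4⟩
    refine ⟨?_, h2, ?_⟩
    · rintro V (hV | rfl) t ht u hu hne p ⟨hp, hq⟩
      · exact h1 V hV t ht u hu hne p ⟨hp, hq⟩
      · exact hne (h3 t ht u hu p hp hq)
    · rintro V hV W rfl p ⟨⟨t, ht, hp⟩, ⟨u, hu, hq⟩⟩
      exact h4 t ⟨V, hV, ht⟩ u hu p hp hq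

/-- Facts about well-formed step sequences. -/
theorem wf_facts {N : Net α} {σ M} (h : StepSeqFrom N N.initMarking σ M)
    (hw : N.WellFormedSeq σ) :
    (∀ p ∈ M, ¬ ∃ t ∈ transOf σ, N.flow p t) ∧
    (∀ t ∈ transOf σ, ∀ u ∈ transOf σ, ∀ p, N.flow t p → N.flow u p → t = u) ∧
    (∀ t ∈ transOf σ, ∀ u ∈ transOf σ, ∀ p, N.flow p t → N.flow p u → t = u) := by
  revert hw
  refine h.snoc_induction (P := fun σ M => N.WellFormedSeq σ →
    (∀ p ∈ M, ¬ ∃ t ∈ transOf σ, N.flow p t) ∧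
    (∀ t ∈ transOf σ, ∀ u ∈ transOf σ, ∀ p, N.flow t p → N.flow u p → t = u) ∧
    (∀ t ∈ transOf σ, ∀ u ∈ transOf σ, ∀ p, N.flow p t → N.flow p u → t = u)) ?_ ?_
  · simp [transOf]
  · intro σ M U M' hσ ih hs hw
    obtain ⟨hw1, hw2, hw3⟩ := wf_snoc.1 hw
    obtain ⟨i1, i2, i3⟩ := ih hw1
    obtain ⟨-, b2, b3, -⟩ := seq_basic hσ
    have hm := hs.mem_iff
    have hp := fun p t => hs.pre_mem (p := p) (t := t)
    have hni := fun t p => not_init (N := N) (t := t) (p := p)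
    have hd : ∀ t ∈ U, ∀ u ∈ U, ∀ p, N.flow p t → N.flow p u → t = u := by
      intro t ht u hu p h1 h2
      by_contra hne
      have := hs.1.1.2.2 t ht u hu hne
      exact (Set.eq_empty_iff_forall_notMem.1 this p) ⟨h1, h2⟩
    simp only [mem_transOf_snoc]
    refine ⟨?_, ?_, ?_⟩
    · rintro p hpM ⟨t, ht | ht, hpt⟩
      · have := (hm p).1 hpM
        rcases this.1 with h | ⟨u, hu, hup⟩
        · exact i1 p h ⟨t, ht, hpt⟩
        · rcases b3 t ht p hpt with h | ⟨v, hv, hvp⟩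
          · exact hni _ _ hup h
          · exact hw3 v hv u hu p hvp hup
      · exact ((hm p).1 hpM).2 ⟨t, ht, hpt⟩
    · rintro t (ht | ht) u (hu | hu) p h1 h2
      · exact i2 t ht u hu p h1 h2
      · exact absurd h2 (hw3 t ht u hu p h1)
      · exact absurd h1 (hw3 u hu t ht p h2)
      · exact hw2 t ht u hu p h1 h2
    · rintro t (ht | ht) u (hu | hu) p h1 h2
      · exact i3 t ht u hu p h1 h2
      · exact absurd ⟨t, ht, h1⟩ (i1 p (hp p u hu h2))
      · exact absurd ⟨u, hu, h2⟩ (i1 p (hp p t ht h1))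
      · exact hd t ht u hu p h1 h2

theorem place_of_pre {N : Net α} (h : N.IsAcyclicNet) {t p : α} (ht : t ∈ N.transitions)
    (hf : N.flow p t) : p ∈ N.places := by
  rcases h.2.2.2.1 p t hf with h1 | h1
  · exact h1.1
  · exact absurd ht (Set.disjoint_left.1 h.2.2.1 h1.2)

theorem place_of_post {N : Net α} (h : N.IsAcyclicNet) {t p : α} (ht : t ∈ N.transitions)
    (hf : N.flow t p) : p ∈ N.places := by
  rcases h.2.2.2.1 t p hf with h1 | h1
  · exact absurd ht (Set.disjoint_left.1 h.2.2.1 h1.1)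
  · exact h1.2

theorem trans_of_pre {N : Net α} (h : N.IsAcyclicNet) {t p : α} (hp : p ∈ N.places)
    (hf : N.flow t p) : t ∈ N.transitions := by
  rcases h.2.2.2.1 t p hf with h1 | h1
  · exact absurd h1.2 (Set.disjoint_left.1 h.2.2.1 hp)
  · exact h1.1

/-- Flow-minimal elements exist. -/
theorem exists_min {N : Net α} (h : N.IsAcyclicNet) {s : Set α} (hs : s.Finite)
    (hne : s.Nonempty) : ∃ m ∈ s, ∀ x ∈ s, ¬ Relation.TransGen N.flow x m := by
  haveI : IsStrictOrder α (Relation.TransGen N.flow) :=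
    { irrefl := h.2.2.2.2.2.1, trans := fun _ _ _ => Relation.TransGen.trans }
  have hw : s.WellFoundedOn (Relation.TransGen N.flow) := hs.wellFoundedOn
  obtain ⟨x, hx⟩ := hne
  obtain ⟨m, -, hm⟩ := WellFounded.has_min hw Set.univ ⟨⟨x, hx⟩, trivial⟩
  exact ⟨m, m.2, fun x hx => hm ⟨x, hx⟩ trivial⟩

theorem init_nonempty {N : Net α} (h : N.IsAcyclicNet) : N.initMarking.Nonempty := by
  obtain ⟨m, hm, hmin⟩ := exists_min h h.1 h.2.2.2.2.1
  refine ⟨m, hm, ?_⟩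
  rw [Set.eq_empty_iff_forall_notMem]
  intro t (ht : N.flow t m)
  have htt := trans_of_pre h hm ht
  obtain ⟨p, hp⟩ := (h.2.2.2.2.2.2 t htt).1
  exact hmin p (place_of_pre h htt hp) ((Relation.TransGen.single hp).tail ht)

theorem induced_scenario {N : Net α} (h : N.IsAcyclicNet) {σ M}
    (hσ : StepSeqFrom N N.initMarking σ M) (hw : N.WellFormedSeq σ) :
    N.inducedScenario σ ∈ N.scenarios := by
  obtain ⟨b1, -, b3, -⟩ := seq_basic hσ
  obtain ⟨-, w2, w3⟩ := wf_facts hσ hw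
  have hpl : (N.inducedScenario σ).places ⊆ N.places := by
    rintro p (hp | hp)
    · exact hp.1
    · obtain ⟨t, ht, htp⟩ := mem_postSet.1 hp
      exact place_of_post h (b1 ht) htp
  have hdis : Disjoint (N.inducedScenario σ).places (N.inducedScenario σ).transitions :=
    h.2.2.1.mono hpl b1
  have hpre : ∀ t ∈ transOf σ, (N.inducedScenario σ).pre t = N.pre t := by
    intro t ht
    ext p
    constructor
    · exact fun hp => hp.1
    · intro hp
      refine ⟨hp, Or.inl ⟨?_, ht⟩⟩
      rcases b3 t ht p hp with hi | hi
      · exact Or.inl hi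
      · exact Or.inr (mem_postSet.2 hi)
  have hpost : ∀ t ∈ transOf σ, (N.inducedScenario σ).post t = N.post t := by
    intro t ht
    ext p
    constructor
    · exact fun hp => hp.1
    · intro hp
      exact ⟨hp, Or.inr ⟨ht, Or.inr (mem_postSet.2 ⟨t, ht, hp⟩)⟩⟩
  have hne : (N.inducedScenario σ).places.Nonempty := (init_nonempty h).mono (fun p hp => Or.inl hp)
  refine ⟨⟨⟨h.1.subset hpl, h.2.1.subset b1, hdis, fun x y hxy => hxy.2, hne, ?_, ?_⟩, ?_⟩,
    ⟨hne, hpl, b1, fun x y => Iff.rfl, fun t ht => ⟨hpre t ht, hpost t ht⟩⟩, ?_⟩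
  · intro x hx
    exact h.2.2.2.2.2.1 x (Relation.TransGen.mono (fun _ _ hab => hab.1) _ _ hx)
  · intro t ht
    rw [hpre t ht, hpost t ht]
    exact h.2.2.2.2.2.2 t (b1 ht)
  · intro p hp
    have hpn := Set.disjoint_left.1 hdis hp
    constructor
    · rintro t ht u hu
      have ht' : t ∈ transOf σ := by
        rcases ht.2 with h1 | h1
        · exact absurd h1.2 hpn
        · exact h1.1
      have hu' : u ∈ transOf σ := by
        rcases hu.2 with h1 | h1
        · exact absurd h1.2 hpn
        · exact h1.1
      exact w2 t ht' u hu' p ht.1 hu.1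
    · rintro t ht u hu
      have ht' : t ∈ transOf σ := by
        rcases ht.2 with h1 | h1
        · exact h1.2
        · exact absurd h1.1 hpn
      have hu' : u ∈ transOf σ := by
        rcases hu.2 with h1 | h1
        · exact h1.2
        · exact absurd h1.1 hpn
      exact w3 t ht' u hu' p ht.1 hu.1
  · ext p
    constructor
    · rintro ⟨hp | hp, hp2⟩
      · exact hp
      · obtain ⟨t, ht, htp⟩ := mem_postSet.1 hp
        have : t ∈ (N.inducedScenario σ).pre p := ⟨htp, Or.inr ⟨ht, Or.inr hp⟩⟩
        rw [hp2] at this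
        exact absurd this (Set.notMem_empty t)
    · intro hp
      refine ⟨Or.inl hp, Set.eq_empty_iff_forall_notMem.2 fun t ht => ?_⟩
      exact not_init ht.1 hp

theorem stepTrans_congr {S N : Net α} (hs : IsSubnet S N) {M U M' : Set α}
    (hU : U ⊆ S.transitions) : StepTrans S M U M' ↔ StepTrans N M U M' := by
  have h1 : S.preSet U = N.preSet U :=
    Set.iUnion₂_congr fun t ht => (hs.2.2.2.2 t (hU ht)).1
  have h2 : S.postSet U = N.postSet U :=
    Set.iUnion₂_congr fun t ht => (hs.2.2.2.2 t (hU ht)).2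
  unfold StepTrans Enabled IsStep
  rw [h1, h2]
  constructor
  · rintro ⟨⟨⟨a, b, c⟩, d⟩, e⟩
    refine ⟨⟨⟨a, b.trans hs.2.2.1, fun t ht u hu hne => ?_⟩, d⟩, e⟩
    rw [← (hs.2.2.2.2 t (hU ht)).1, ← (hs.2.2.2.2 u (hU hu)).1]
    exact c t ht u hu hne
  · rintro ⟨⟨⟨a, b, c⟩, d⟩, e⟩
    refine ⟨⟨⟨a, hU, fun t ht u hu hne => ?_⟩, d⟩, e⟩
    rw [(hs.2.2.2.2 t (hU ht)).1, (hs.2.2.2.2 u (hU hu)).1]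
    exact c t ht u hu hne

theorem seq_up {S N : Net α} (hs : IsSubnet S N) {M σ M'} (h : StepSeqFrom S M σ M') :
    StepSeqFrom N M σ M' := by
  induction h with
  | nil => exact .nil _
  | cons h1 _ ih => exact .cons ((stepTrans_congr hs h1.sub).1 h1) ih

theorem seq_down {S N : Net α} (hs : IsSubnet S N) {M σ M'} (h : StepSeqFrom N M σ M')
    (hσ : transOf σ ⊆ S.transitions) : StepSeqFrom S M σ M' := by
  induction h with
  | nil => exact .nil _
  | @cons M U M' τ M'' h1 _ ih =>
    refine .cons ((stepTrans_congr hs fun t ht => hσ ⟨U, by simp, ht⟩).2 h1) (ih ?_)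
    rintro t ⟨V, hV, ht⟩
    exact hσ ⟨V, by simp [hV], ht⟩

theorem sseq_up {S N : Net α} (hs : CoInitial S N) {σ} (h : σ ∈ S.sseq) : σ ∈ N.sseq := by
  obtain ⟨M, h⟩ := h
  have := seq_up hs.1 h
  rw [initMarking, hs.2] at this
  exact ⟨M, this⟩

theorem exists_scenario {N : Net α} (h : N.IsAcyclicNet) {σ} (hσ : σ ∈ N.sseq)
    (hw : N.WellFormedSeq σ) : N.inducedScenario σ ∈ N.scenarios ∧
      σ ∈ (N.inducedScenario σ).sseq := by
  obtain ⟨M, hM⟩ := hσ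
  have hS := induced_scenario h hM hw
  refine ⟨hS, M, ?_⟩
  rw [initMarking, hS.2.2]
  exact seq_down hS.2.1 hM (fun t ht => ht)

theorem occ_pre {S : Net α} (h : S.IsOccurrenceNet) {t u p : α} (ht : t ∈ S.transitions)
    (h1 : S.flow t p) (h2 : S.flow u p) : t = u :=
  (h.2 p (place_of_post h.1 ht h1)).1 h1 h2

theorem occ_wf {S : Net α} (h : S.IsOccurrenceNet) {σ M}
    (hσ : StepSeqFrom S S.initMarking σ M) : S.WellFormedSeq σ := by
  refine hσ.snoc_induction (P := fun σ M => S.WellFormedSeq σ) ?_ ?_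
  · simp [WellFormedSeq]
  · intro σ M U M' hσ ih hs
    obtain ⟨b1, -⟩ := seq_basic hσ
    refine wf_snoc.2 ⟨ih, fun t ht u hu p h1 h2 => occ_pre h (hs.sub ht) h1 h2, ?_⟩
    intro t ht u hu p h1 h2
    have := occ_pre h (b1 ht) h1 h2
    subst this
    obtain ⟨q, hq⟩ := (h.1.2.2.2.2.2.2 t (b1 ht)).1
    exact (wf_facts hσ ih).1 q (hs.pre_mem hu hq) ⟨t, ht, hq⟩

theorem occ_fires {S : Net α} (h : S.IsOccurrenceNet) {t : α} (ht : t ∈ S.transitions) :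
    ∃ σ ∈ S.sseq, t ∈ transOf σ := by
  have hfin : {X : Set α | ∃ σ ∈ S.sseq, transOf σ = X}.Finite := by
    refine h.1.2.1.finite_subsets.subset ?_
    rintro X ⟨σ, ⟨M, hσ⟩, rfl⟩
    exact (seq_basic hσ).1
  obtain ⟨X, hX⟩ := hfin.exists_maximal ⟨_, [], ⟨_, .nil _⟩, rfl⟩
  obtain ⟨⟨σ, ⟨M, hσ⟩, rfl⟩, hmax⟩ := hX
  by_contra hcon
  have hne : (S.transitions \ transOf σ).Nonempty :=
    ⟨t, ht, fun h' => hcon ⟨σ, ⟨M, hσ⟩, h'⟩⟩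
  obtain ⟨u, hu, hmin⟩ := exists_min h.1 (h.1.2.1.subset Set.diff_subset) hne
  obtain ⟨b1, b2, b3, b4⟩ := seq_basic hσ
  have hen : ∀ p, S.flow p u → p ∈ M := by
    intro p hp
    have hpp := place_of_pre h.1 hu.1 hp
    apply b4
    · by_cases hi : p ∈ S.initMarking
      · exact Or.inl hi
      · right
        have : (S.pre p).Nonempty := by
          rw [Set.nonempty_iff_ne_empty]
          exact fun h' => hi ⟨hpp, h'⟩
        obtain ⟨v, hv⟩ := this
        refine ⟨v, ?_, hv⟩
        by_contra hvn
        exact hmin v ⟨trans_of_pre h.1 hpp hv, hvn⟩ ((Relation.TransGen.single hv).tail hp)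
    · rintro ⟨v, hv, hpv⟩
      have : v = u := (h.2 p hpp).2 hpv hp
      subst this
      exact hu.2 hv
  have hst : StepTrans S M {u} ((M ∪ S.postSet {u}) \ S.preSet {u}) := by
    refine ⟨⟨⟨⟨u, rfl⟩, by simpa using hu.1, ?_⟩, ?_⟩, rfl⟩
    · rintro a rfl b rfl hab
      exact absurd rfl hab
    · intro p hp
      obtain ⟨v, rfl, hv⟩ := mem_preSet.1 hp
      exact hen p hv
  have := hmax (y := transOf (σ ++ [{u}])) ⟨_, ⟨_, hσ.append (.cons hst (.nil _))⟩, rfl⟩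
    (fun x hx => mem_transOf_snoc.2 (Or.inl hx))
  exact hu.2 (this (mem_transOf_snoc.2 (Or.inr rfl)))

theorem lin_list {N : Net α} (l : List α) (hl : l.Nodup) (ht : ∀ t ∈ l, t ∈ N.transitions)
    (hd : ∀ t ∈ l, ∀ u ∈ l, ∀ p, N.flow p t → N.flow p u → t = u) (M : Set α)
    (hM : ∀ t ∈ l, ∀ p, N.flow p t → p ∈ M) :
    ∃ M', StepSeqFrom N M (l.map fun t => {t}) M' ∧
      ∀ p, (p ∈ M ∨ ∃ t ∈ l, N.flow t p) → (¬ ∃ t ∈ l, N.flow p t) → p ∈ M' := by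
  induction l generalizing M with
  | nil => exact ⟨M, .nil M, by simp⟩
  | cons a l ih =>
    have hst : StepTrans N M {a} ((M ∪ N.postSet {a}) \ N.preSet {a}) := by
      refine ⟨⟨⟨⟨a, rfl⟩, by simpa using ht a (by simp), ?_⟩, ?_⟩, rfl⟩
      · rintro x rfl y rfl hxy
        exact absurd rfl hxy
      · intro p hp
        obtain ⟨v, rfl, hv⟩ := mem_preSet.1 hp
        exact hM v (by simp) p hv
    have hm := hst.mem_iff
    simp only [Set.mem_singleton_iff, exists_eq_left] at hm
    have hal := (List.nodup_cons.1 hl).1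
    obtain ⟨M', h1, h2⟩ := ih (List.nodup_cons.1 hl).2 (fun t h => ht t (by simp [h]))
      (fun t h u h' => hd t (by simp [h]) u (by simp [h']))
      _ (fun t h p hp => (hm p).2 ⟨Or.inl (hM t (by simp [h]) p hp), fun hpa => by
        have := hd a (by simp) t (by simp [h]) p hpa hp
        subst this
        exact hal h⟩)
    refine ⟨M', .cons hst h1, fun p hp hn => h2 p ?_ ?_⟩
    · rw [hm]
      simp only [List.mem_cons, exists_eq_or_imp] at hp hn
      tauto
    · rintro ⟨t, h, h'⟩
      exact hn ⟨t, by simp [h], h'⟩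

/-- An enumeration of a finite set of transitions. -/
noncomputable def enum (U : Set α) : List α := by
  classical exact if h : U.Finite then h.toFinset.toList else []

theorem mem_enum {U : Set α} (h : U.Finite) {t : α} : t ∈ enum U ↔ t ∈ U := by
  simp [enum, h]

theorem nodup_enum (U : Set α) : (enum U).Nodup := by
  unfold enum
  split_ifs
  · exact Finset.nodup_toList _
  · exact List.nodup_nil

theorem lin_seq {N : Net α} (h : N.IsAcyclicNet) {M σ M'} (hσ : StepSeqFrom N M σ M')
    (M₁ : Set α) (hM : M ⊆ M₁) :
    ∃ M₁', StepSeqFrom N M₁ (σ.flatMap fun U => (enum U).map fun t => {t}) M₁' := by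
  induction hσ generalizing M₁ with
  | nil => exact ⟨M₁, .nil _⟩
  | @cons M U M' τ M'' hs _ ih =>
    have hf : U.Finite := h.2.1.subset hs.sub
    obtain ⟨M₂, h1, h2⟩ := lin_list (N := N) (enum U) (nodup_enum U)
      (fun t ht => hs.sub ((mem_enum hf).1 ht))
      (fun t ht u hu p hp hq => by
        by_contra hne
        have := hs.1.1.2.2 t ((mem_enum hf).1 ht) u ((mem_enum hf).1 hu) hne
        exact (Set.eq_empty_iff_forall_notMem.1 this p) ⟨hp, hq⟩) M₁
      (fun t ht p hp => hM (hs.pre_mem ((mem_enum hf).1 ht) hp))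
    obtain ⟨M₃, h3⟩ := ih M₂ (fun p hp => by
      have := (hs.mem_iff p).1 hp
      simp only [mem_enum hf] at h2
      exact h2 p (this.1.imp (fun h => hM h) id) this.2)
    exact ⟨M₃, by simpa using h1.append h3⟩

theorem wf_of_firing {N : Net α} (h : N.IsAcyclicNet)
    (h1 : ∀ t ∈ N.transitions, ∃ S ∈ N.scenarios, t ∈ S.transitions)
    (h2 : ∀ σ ∈ N.fseq, ∃ S ∈ N.scenarios, σ ∈ S.fseq) : N.WellFormedNet := by
  constructor
  · intro t ht
    obtain ⟨S, hS, htS⟩ := h1 t ht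
    obtain ⟨σ, hσ, htσ⟩ := occ_fires hS.1 htS
    exact ⟨σ, sseq_up hS.2 hσ, htσ⟩
  · rintro σ ⟨M, hσ⟩
    obtain ⟨M₁, hτ⟩ := lin_seq h hσ _ subset_rfl
    obtain ⟨S, hS, ⟨M₂, hτS⟩, -⟩ := h2 _ ⟨⟨M₁, hτ⟩, by
      intro U hU
      simp only [List.mem_flatMap, List.mem_map] at hU
      obtain ⟨V, -, t, -, rfl⟩ := hU
      exact ⟨t, rfl⟩⟩
    have hfin : ∀ U ∈ σ, U.Finite := fun U hU =>
      h.2.1.subset fun t ht => (seq_basic hσ).1 ⟨U, hU, ht⟩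
    have hsub : ∀ U ∈ σ, ∀ t ∈ U, t ∈ S.transitions := by
      intro U hU t ht
      refine (seq_basic hτS).1 ⟨{t}, ?_, rfl⟩
      simp only [List.mem_flatMap, List.mem_map]
      exact ⟨U, hU, t, (mem_enum (hfin U hU)).2 ht, rfl⟩
    have hpost : ∀ U ∈ σ, ∀ t ∈ U, ∀ p, N.flow t p → S.flow t p := by
      intro U hU t ht p hp
      have : p ∈ S.post t := by
        rw [(hS.2.1.2.2.2.2 t (hsub U hU t ht)).2]
        exact hp
      exact this
    constructor
    · intro U hU t ht u hu hne
      rw [Set.eq_empty_iff_forall_notMem]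
      rintro p ⟨hp, hq⟩
      exact hne (occ_pre hS.1 (hsub U hU t ht) (hpost U hU t ht p hp) (hpost U hU u hu p hq))
    · have hw := (occ_wf hS.1 hτS).2
      rw [List.pairwise_flatMap] at hw
      refine hw.2.imp_of_mem ?_
      intro U V hU hV hUV
      rw [Set.eq_empty_iff_forall_notMem]
      rintro p ⟨hp, hq⟩
      obtain ⟨t, ht, htp⟩ := mem_postSet.1 hp
      obtain ⟨u, hu, hup⟩ := mem_postSet.1 hq
      have := hUV {t} (List.mem_map.2 ⟨t, (mem_enum (hfin U hU)).2 ht, rfl⟩)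
        {u} (List.mem_map.2 ⟨u, (mem_enum (hfin V hV)).2 hu, rfl⟩)
      exact (Set.eq_empty_iff_forall_notMem.1 this p)
        ⟨mem_postSet.2 ⟨t, rfl, hpost U hU t ht p htp⟩,
          mem_postSet.2 ⟨u, rfl, hpost V hV u hu p hup⟩⟩

end Net

/-- For an acyclic net, the following are equivalent: (1) it is
well-formed; (2) each transition occurs in a scenario and each step sequence is a step
sequence of a scenario; (3) each transition occurs in a scenario and each firing
sequence is a firing sequence of a scenario. -/
theorem stmt15 {α : Type*} (N : Net α) (h : N.IsAcyclicNet) :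
    (N.WellFormedNet ↔
      ((∀ t ∈ N.transitions, ∃ S ∈ N.scenarios, t ∈ S.transitions) ∧
       (∀ σ ∈ N.sseq, ∃ S ∈ N.scenarios, σ ∈ S.sseq))) ∧
    (N.WellFormedNet ↔
      ((∀ t ∈ N.transitions, ∃ S ∈ N.scenarios, t ∈ S.transitions) ∧
       (∀ σ ∈ N.fseq, ∃ S ∈ N.scenarios, σ ∈ S.fseq))) := by
  have h12 : N.WellFormedNet →
      ((∀ t ∈ N.transitions, ∃ S ∈ N.scenarios, t ∈ S.transitions) ∧
       (∀ σ ∈ N.sseq, ∃ S ∈ N.scenarios, σ ∈ S.sseq)) := by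
    rintro ⟨h1, h2⟩
    refine ⟨fun t ht => ?_, fun σ hσ => ⟨_, Net.exists_scenario h hσ (h2 σ hσ)⟩⟩
    obtain ⟨σ, hσ, htσ⟩ := h1 t ht
    exact ⟨_, (Net.exists_scenario h hσ (h2 σ hσ)).1, htσ⟩
  have h23 : (∀ σ ∈ N.sseq, ∃ S ∈ N.scenarios, σ ∈ S.sseq) →
      (∀ σ ∈ N.fseq, ∃ S ∈ N.scenarios, σ ∈ S.fseq) := by
    intro hs σ hσ
    obtain ⟨S, hS, hσS⟩ := hs σ hσ.1
    exact ⟨S, hS, hσS, hσ.2⟩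
  exact ⟨⟨h12, fun hh => Net.wf_of_firing h hh.1 (h23 hh.2)⟩,
    ⟨fun hw => ⟨(h12 hw).1, h23 (h12 hw).2⟩, fun hh => Net.wf_of_firing h hh.1 hh.2⟩⟩
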